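/- Let K be a field of characteristic zero, R = K[x_0,…,x_N], S = K[y_0,…,y_N], and let I = {I_n}_{n≥1} be a differentially closed graded filtration of proper homogeneous ideals of R with α_n = α(I_n), β_s = soc(S/L^s(I)), such that {α_n − n} is nondecreasing and not bounded above. Set α̂ = lim_{n→∞} α_n/n and β̂ = lim_{s→∞} β_s/s. Then for all s, n ≥ 1: soc(S/L^s(I)) ≤ s·α̂/(α̂ − 1) and n·β̂/(β̂ − 1) ≤ α(I_n). -/

import Mathlib

open MvPolynomial Filter Topology
open scoped ENNReal

/-- The differential operator `D_a = (1/a!) ∂^a/∂x^a`, characterized on monomials by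
`D_a (x^b) = C(b,a) · x^(b-a)` when `b ≥ a` componentwise (and `0` otherwise), where
`C(b,a) = ∏ᵢ (bᵢ choose aᵢ)`; note that the binomial coefficient vanishes when
`b ≥ a` fails, so no case split is needed. -/
noncomputable def Dop {m : ℕ} {K : Type*} [CommSemiring K] (a : Fin m →₀ ℕ)
    (f : MvPolynomial (Fin m) K) : MvPolynomial (Fin m) K :=
  ∑ b ∈ f.support,
    MvPolynomial.monomial (b - a) ((((∏ i, Nat.choose (b i) (a i)) : ℕ) : K) * f.coeff b)

/-- A filtration `{I n}` of ideals of `K[x_0,…,x_{m-1}]` is differentially closed if for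
every `n ≥ 1`, every operator `D_a` with `|a| ≤ n - 1`, and every `F ∈ I n`, we have
`D_a F ∈ I (n - |a|)`. -/
def DiffClosed {m : ℕ} {K : Type*} [CommSemiring K]
    (I : ℕ → Ideal (MvPolynomial (Fin m) K)) : Prop :=
  ∀ n, 1 ≤ n → ∀ a : Fin m →₀ ℕ, (a.sum fun _ k => k) ≤ n - 1 →
    ∀ F ∈ I n, Dop a F ∈ I (n - a.sum fun _ k => k)

/-- The iterated partial derivative `∂^a/∂y^a`. -/
noncomputable def multiPderiv {m : ℕ} {K : Type*} [CommSemiring K] (a : Fin m →₀ ℕ)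
    (g : MvPolynomial (Fin m) K) : MvPolynomial (Fin m) K :=
  (List.finRange m).foldl (fun h i => (fun q => MvPolynomial.pderiv i q)^[a i] h) g

/-- The action `F ∘ g` of `R = K[x]` on `S = K[y]` by partial differentiation: the
monomial `x^a` acts on `g` as `∂^a g/∂y^a`, extended linearly. -/
noncomputable def diffAction {m : ℕ} {K : Type*} [CommSemiring K]
    (F g : MvPolynomial (Fin m) K) : MvPolynomial (Fin m) K :=
  ∑ a ∈ F.support, F.coeff a • multiPderiv a g

/-- The perpendicular space `((I)_d)^⊥ = {g ∈ S_d | F ∘ g = 0 for all F ∈ I_d}` of the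
degree-`d` part of an ideal `I ⊆ R`, inside `S_d`, for the differentiation action. -/
def perpSet {m : ℕ} {K : Type*} [CommSemiring K]
    (I : Ideal (MvPolynomial (Fin m) K)) (d : ℕ) : Set (MvPolynomial (Fin m) K) :=
  {g | g ∈ MvPolynomial.homogeneousSubmodule (Fin m) K d ∧
       ∀ F ∈ I, F ∈ MvPolynomial.homogeneousSubmodule (Fin m) K d → diffAction F g = 0}

/-- `L^s(I) = ⊕_{d ≥ s+1} ((I_{d-s})_d)^⊥ ⊆ S`, the (internal direct) sum of the
perpendicular spaces, realized as the subspace of `S` spanned by them. -/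
noncomputable def Lpow {m : ℕ} {K : Type*} [CommSemiring K]
    (I : ℕ → Ideal (MvPolynomial (Fin m) K)) (s : ℕ) :
    Submodule K (MvPolynomial (Fin m) K) :=
  Submodule.span K (⋃ d ∈ Set.Ici (s + 1), perpSet (I (d - s)) d)

/-- An ideal of a polynomial ring is homogeneous when it contains all homogeneous
components of its elements. -/
def IsHomogeneousIdeal {m : ℕ} {K : Type*} [CommSemiring K]
    (I : Ideal (MvPolynomial (Fin m) K)) : Prop :=
  ∀ f ∈ I, ∀ d : ℕ, MvPolynomial.homogeneousComponent d f ∈ I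

/-- The initial degree `α(I) = min {deg f | 0 ≠ f ∈ I}` of an ideal. -/
noncomputable def initialDegree {m : ℕ} {K : Type*} [CommSemiring K]
    (I : Ideal (MvPolynomial (Fin m) K)) : ℕ :=
  sInf {d : ℕ | ∃ f ∈ I, f ≠ 0 ∧ f.totalDegree = d}

/-- The socle degree (end) of `S/L`: the largest degree `d` with `(S/L)_d ≠ 0`,
i.e. the largest `d` such that `S_d ⊄ L`. -/
noncomputable def socLE {m : ℕ} {K : Type*} [CommSemiring K]
    (L : Submodule K (MvPolynomial (Fin m) K)) : ℕ :=
  sSup {d : ℕ | ¬ MvPolynomial.homogeneousSubmodule (Fin m) K d ≤ L}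


lemma aux_iter {m : ℕ} {K : Type*} [Field K] [CharZero K] (i : Fin m) (n : ℕ)
    (c : Fin m →₀ ℕ) : ∃ k : K, k ≠ 0 ∧ ∀ g : MvPolynomial (Fin m) K,
      coeff c ((fun q => MvPolynomial.pderiv i q)^[n] g) =
        k * coeff (c + Finsupp.single i n) g := by
  induction n with
  | zero => exact ⟨1, one_ne_zero, fun g => by simp⟩
  | succ n ih =>
    obtain ⟨k, hk, h⟩ := ih
    refine ⟨k * (((c + Finsupp.single i n) i : ℕ) + 1 : K), mul_ne_zero hk (Nat.cast_add_one_ne_zero _), fun g => ?_⟩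
    rw [Function.iterate_succ_apply, h, MvPolynomial.coeff_pderiv, add_assoc, ← Finsupp.single_add]
    ring

lemma aux_fold {m : ℕ} {K : Type*} [Field K] [CharZero K] (a : Fin m →₀ ℕ) (l : List (Fin m)) :
    ∀ c : Fin m →₀ ℕ, ∃ k : K, k ≠ 0 ∧ ∀ g : MvPolynomial (Fin m) K,
      coeff c (l.foldl (fun h i => (fun q => MvPolynomial.pderiv i q)^[a i] h) g) =
        k * coeff (c + (l.map fun i => Finsupp.single i (a i)).sum) g := by
  induction l with
  | nil => exact fun c => ⟨1, one_ne_zero, fun g => by simp⟩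
  | cons i l ih =>
    intro c
    obtain ⟨k, hk, h⟩ := ih c
    obtain ⟨k', hk', h'⟩ := aux_iter (K := K) i (a i) (c + (l.map fun i => Finsupp.single i (a i)).sum)
    refine ⟨k * k', mul_ne_zero hk hk', fun g => ?_⟩
    rw [List.foldl_cons, h, h', List.map_cons, List.sum_cons, mul_assoc]
    congr 3
    abel

lemma aux_mp {m : ℕ} {K : Type*} [Field K] [CharZero K] (a : Fin m →₀ ℕ) :
    ∃ k : K, k ≠ 0 ∧ ∀ g : MvPolynomial (Fin m) K, coeff 0 (multiPderiv a g) = k * coeff a g := by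
  obtain ⟨k, hk, h⟩ := aux_fold (K := K) a (List.finRange m) 0
  refine ⟨k, hk, fun g => ?_⟩
  rw [multiPderiv, h]
  congr 2
  rw [zero_add, ← List.ofFn_eq_map, List.sum_ofFn]
  exact Finsupp.univ_sum_single a

lemma aux_not_le {m : ℕ} {K : Type*} [Field K] [CharZero K]
    (I : ℕ → Ideal (MvPolynomial (Fin m) K)) (s d : ℕ)
    (F : MvPolynomial (Fin m) K) (hF : F ∈ I (d - s)) (hF0 : F ≠ 0) (hd : F.IsHomogeneous d) :
    ¬ homogeneousSubmodule (Fin m) K d ≤ Lpow I s := by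
  intro hle
  choose k hk hk' using fun a : Fin m →₀ ℕ => aux_mp (K := K) a
  have key : ∀ g ∈ Lpow I s, ∑ b ∈ F.support, F.coeff b * (k b * coeff b g) = 0 := by
    intro g hg
    induction hg using Submodule.span_induction with
    | zero => simp
    | add x y _ _ hx hy => simp [mul_add, Finset.sum_add_distrib, hx, hy]
    | smul c x _ hx =>
      have : ∑ b ∈ F.support, F.coeff b * (k b * coeff b (c • x)) =
          c * ∑ b ∈ F.support, F.coeff b * (k b * coeff b x) := by
        rw [Finset.mul_sum]
        refine Finset.sum_congr rfl fun b _ => ?_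
        rw [coeff_smul, smul_eq_mul]; ring
      rw [this, hx, mul_zero]
    | mem g hg =>
      simp only [Set.mem_iUnion] at hg
      obtain ⟨e, _, hg1, hg2⟩ := hg
      rw [mem_homogeneousSubmodule] at hg1
      by_cases hed : e = d
      · subst hed
        have h0 := congrArg (coeff 0) (hg2 F hF hd)
        rw [diffAction, coeff_sum] at h0
        simpa [hk'] using h0
      · refine Finset.sum_eq_zero fun b hb => ?_
        have h1 : coeff b g = 0 := by
          by_contra hne
          exact hed ((hg1 hne).symm.trans (hd (mem_support_iff.1 hb)))
        simp [h1]
  obtain ⟨a, ha⟩ := MvPolynomial.support_nonempty.2 hF0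
  have h2 := key (monomial a 1) (hle (by
    rw [mem_homogeneousSubmodule]
    have : F.coeff a ≠ 0 := mem_support_iff.1 ha
    refine isHomogeneous_monomial _ ?_
    have := hd this
    rw [← this, Finsupp.degree_eq_weight_one]; rfl))
  rw [Finset.sum_eq_single a] at h2
  · simp [hk, mem_support_iff.1 ha] at h2
  · intro b _ hb
    simp [coeff_monomial, hb.symm]
  · exact fun h => absurd ha h

lemma aux_alpha_spec {m : ℕ} {K : Type*} [Field K]
    (I : Ideal (MvPolynomial (Fin m) K)) (h : I ≠ ⊥) :
    ∃ f ∈ I, f ≠ 0 ∧ f.totalDegree = initialDegree I := by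
  obtain ⟨f, hf, hf0⟩ := Submodule.exists_mem_ne_zero_of_ne_bot h
  exact Nat.sInf_mem (s := {d : ℕ | ∃ f ∈ I, f ≠ 0 ∧ f.totalDegree = d}) ⟨_, f, hf, hf0, rfl⟩

lemma aux_alpha_le {m : ℕ} {K : Type*} [Field K]
    (I : Ideal (MvPolynomial (Fin m) K)) (f : MvPolynomial (Fin m) K) (hf : f ∈ I) (h : f ≠ 0) :
    initialDegree I ≤ f.totalDegree := Nat.sInf_le ⟨f, hf, h, rfl⟩

lemma aux_hom {N : ℕ} {K : Type*} [Field K]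
    (I : Ideal (MvPolynomial (Fin (N + 1)) K)) (h : I ≠ ⊥) (hh : IsHomogeneousIdeal I) (d : ℕ)
    (hd : initialDegree I ≤ d) : ∃ F ∈ I, F ≠ 0 ∧ F.IsHomogeneous d := by
  obtain ⟨f, hf, hf0, hfd⟩ := aux_alpha_spec I h
  have hc : homogeneousComponent f.totalDegree f ≠ 0 := by
    intro h0
    obtain ⟨b, hb, hb'⟩ := Finset.exists_mem_eq_sup f.support (support_nonempty.2 hf0)
      (fun s => s.sum fun _ e => e)
    have h1 := congrArg (coeff b) h0
    rw [coeff_homogeneousComponent, if_pos] at h1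
    · exact mem_support_iff.1 hb (by simpa using h1)
    · exact hb'.symm
  refine ⟨X 0 ^ (d - f.totalDegree) * homogeneousComponent f.totalDegree f,
    I.mul_mem_left _ (hh f hf _), mul_ne_zero (pow_ne_zero _ (X_ne_zero _)) hc, ?_⟩
  have h3 := ((isHomogeneous_X K (0 : Fin (N+1))).pow (d - f.totalDegree)).mul
    (homogeneousComponent_isHomogeneous f.totalDegree f)
  convert h3 using 1
  omega

lemma aux_le {m : ℕ} {K : Type*} [Field K]
    (I : ℕ → Ideal (MvPolynomial (Fin m) K)) (s d : ℕ) (hsd : s < d)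
    (h : ¬ homogeneousSubmodule (Fin m) K d ≤ Lpow I s) : initialDegree (I (d - s)) ≤ d := by
  by_contra hlt
  push Not at hlt
  refine h fun g hg => Submodule.subset_span ?_
  simp only [Set.mem_iUnion]
  refine ⟨d, hsd, hg, fun F hF hFd => ?_⟩
  by_cases hF0 : F = 0
  · subst hF0; simp [diffAction]
  · have h1 := aux_alpha_le _ F hF hF0
    rw [mem_homogeneousSubmodule] at hFd
    rw [hFd.totalDegree hF0] at h1
    omega

/-- (Corollary `boundingWaldschmidt`.)  In the setting of the
inverse-system duality theorem (differentially closed graded filtration of proper nonzero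
homogeneous ideals with `{α_n - n}` nondecreasing and unbounded), with
`α̂ = lim α_n/n` and `β̂ = lim β_s/s` in `ℝ≥0∞`, one has for all `s, n ≥ 1` the bounds
`soc(S/L^s(I)) ≤ s·α̂/(α̂ - 1)` and `n·β̂/(β̂ - 1) ≤ α(I_n)`; the factor `β̂/(β̂ - 1)`
is rendered as `1 + (β̂ - 1)⁻¹`, the form valid in `ℝ≥0∞` under the paper's conventions
(value `1` when `β̂ = ∞`). -/
theorem statement_15 {N : ℕ} {K : Type*} [Field K] [CharZero K]
    (I : ℕ → Ideal (MvPolynomial (Fin (N + 1)) K))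
    (hfil : ∀ n, 1 ≤ n → I (n + 1) ≤ I n)
    (hgr : ∀ m n, 1 ≤ m → 1 ≤ n → I m * I n ≤ I (m + n))
    (hhom : ∀ n, 1 ≤ n → IsHomogeneousIdeal (I n))
    (hproper : ∀ n, 1 ≤ n → I n ≠ ⊤)
    (hne : ∀ n, 1 ≤ n → I n ≠ ⊥)
    (hdc : DiffClosed I)
    (hmono : ∀ n, 1 ≤ n →
      (initialDegree (I n) : ℤ) - n ≤ (initialDegree (I (n + 1)) : ℤ) - (n + 1))
    (hunb : ∀ C : ℤ, ∃ n : ℕ, 1 ≤ n ∧ C < (initialDegree (I n) : ℤ) - n)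
    (A B : ℝ≥0∞)
    (hA : Tendsto (fun n : ℕ => (initialDegree (I n) : ℝ≥0∞) / (n : ℝ≥0∞)) atTop (𝓝 A))
    (hB : Tendsto (fun s : ℕ => (socLE (Lpow I s) : ℝ≥0∞) / (s : ℝ≥0∞)) atTop (𝓝 B)) :
    (∀ s : ℕ, 1 ≤ s → (socLE (Lpow I s) : ℝ≥0∞) ≤ (s : ℝ≥0∞) * (A / (A - 1))) ∧
    (∀ n : ℕ, 1 ≤ n → (n : ℝ≥0∞) * (1 + (B - 1)⁻¹) ≤ (initialDegree (I n) : ℝ≥0∞)) := by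
  have hsub : ∀ n, 1 ≤ n → ∀ k, 1 ≤ k →
      initialDegree (I (k * n)) ≤ k * initialDegree (I n) := by
    intro n hn k hk
    induction k, hk using Nat.le_induction with
    | base => simp
    | succ k hk ih =>
      obtain ⟨f, hf, hf0, hfd⟩ := aux_alpha_spec _ (hne n hn)
      have hkn : 1 ≤ k * n := Nat.mul_pos hk hn
      obtain ⟨g, hg, hg0, hgd⟩ := aux_alpha_spec _ (hne (k * n) hkn)
      have h1 := aux_alpha_le _ (g * f) (hgr _ _ hkn hn (Ideal.mul_mem_mul hg hf))
        (mul_ne_zero hg0 hf0)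
      have h2 := totalDegree_mul g f
      rw [add_mul, one_mul, add_mul, one_mul]
      omega
  have hmono' : ∀ m n, 1 ≤ m → m ≤ n →
      (initialDegree (I m) : ℤ) - m ≤ (initialDegree (I n) : ℤ) - n := by
    intro m n hm hmn
    induction n, hmn using Nat.le_induction with
    | base => exact le_rfl
    | succ n hn ih =>
      have := hmono n (hm.trans hn)
      push_cast
      omega
  have hgt : ∀ n, 1 ≤ n → n < initialDegree (I n) := by
    intro n hn
    by_contra hle
    push Not at hle
    obtain ⟨k, hk, hk'⟩ := hunb 0
    have h1 := hsub n hn k hk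
    have h2 := hmono' k (k * n) hk (Nat.le_mul_of_pos_right _ hn)
    have h3 : k * initialDegree (I n) ≤ k * n := Nat.mul_le_mul_left _ hle
    have h4 : (initialDegree (I (k * n)) : ℤ) ≤ ((k * n : ℕ) : ℤ) := by exact_mod_cast h1.trans h3
    omega
  have htend : ∀ q, 1 ≤ q → Tendsto (fun k : ℕ => k * q) atTop atTop := fun q hq =>
    tendsto_atTop_mono (fun k => Nat.le_mul_of_pos_right _ hq) tendsto_id
  have hcan : ∀ k a b : ℕ, 1 ≤ k →
      ((k * a : ℕ) : ℝ≥0∞) / ((k * b : ℕ) : ℝ≥0∞) = (a : ℝ≥0∞) / b := by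
    intro k a b hk
    push_cast
    exact ENNReal.mul_div_mul_left _ _ (by simp; omega) (by simp)
  have hAle : ∀ n, 1 ≤ n → A ≤ (initialDegree (I n) : ℝ≥0∞) / n := by
    intro n hn
    refine le_of_tendsto (hA.comp (htend n hn)) ?_
    filter_upwards [eventually_ge_atTop 1] with k hk
    rw [← hcan k _ _ hk]
    simp only [Function.comp]
    gcongr
    exact hsub n hn k hk
  have hA1 : 1 ≤ A := by
    refine ge_of_tendsto hA ?_
    filter_upwards [eventually_ge_atTop 1] with k hk
    rw [ENNReal.le_div_iff_mul_le (Or.inl (by simp; omega)) (Or.inl (by simp)), one_mul]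
    exact_mod_cast (hgt k hk).le
  have hbdd : ∀ s, BddAbove {d : ℕ | ¬ homogeneousSubmodule (Fin (N + 1)) K d ≤ Lpow I s} := by
    intro s
    obtain ⟨n, hn, hn'⟩ := hunb s
    refine ⟨s + n, fun d hd => ?_⟩
    by_contra hlt
    push Not at hlt
    have h1 := aux_le I s d (by omega) hd
    have h2 := hmono' n (d - s) hn (by omega)
    omega
  have hge : ∀ s n, 1 ≤ n → initialDegree (I n) ≤ n + s → n + s ≤ socLE (Lpow I s) := by
    intro s n hn h
    obtain ⟨F, hF, hF0, hFd⟩ := aux_hom _ (hne n hn) (hhom n hn) _ h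
    exact le_csSup (hbdd s) (aux_not_le I s (n + s) F (by simpa using hF) hF0 hFd)
  constructor
  · intro s hs
    have hAtop : A ≠ ⊤ := by
      have := hAle 1 le_rfl
      rintro rfl
      simp at this
    rcases hA1.eq_or_lt with h1 | h1
    · rw [← h1]
      simp [ENNReal.mul_top, show s ≠ 0 by omega]
    lift A to NNReal using hAtop
    have h1' : (1 : NNReal) < A := by exact_mod_cast h1
    have hR : (1 : ℝ) < (A : ℝ) := by exact_mod_cast h1'
    have main : ((socLE (Lpow I s) : ℕ) : ℝ) * ((A : ℝ) - 1) ≤ s * A := by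
      rcases le_or_gt (socLE (Lpow I s)) s with hle | hlt
      · have : ((socLE (Lpow I s) : ℕ) : ℝ) ≤ s := by exact_mod_cast hle
        have hs0 : (0 : ℝ) ≤ s := by positivity
        nlinarith
      · have hmem : socLE (Lpow I s) ∈
            {d : ℕ | ¬ homogeneousSubmodule (Fin (N + 1)) K d ≤ Lpow I s} := by
          refine Nat.sSup_mem ?_ (hbdd s)
          by_contra hemp
          rw [Set.not_nonempty_iff_eq_empty] at hemp
          simp [socLE, hemp] at hlt
        have h2 := aux_le I s _ hlt hmem
        have h3 := hAle (socLE (Lpow I s) - s) (by omega)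
        generalize socLE (Lpow I s) = d at *
        obtain ⟨n, rfl⟩ : ∃ n, d = s + n := ⟨d - s, by omega⟩
        rw [Nat.add_sub_cancel_left] at h2 h3
        rw [ENNReal.le_div_iff_mul_le (Or.inl (by simp; omega)) (Or.inl (by simp))] at h3
        have h4 : A * (n : NNReal) ≤ (initialDegree (I n) : NNReal) := by exact_mod_cast h3
        have h5 : (A : ℝ) * n ≤ (initialDegree (I n) : ℝ) := by exact_mod_cast h4
        have h6 : (initialDegree (I n) : ℝ) ≤ s + n := by exact_mod_cast h2
        push_cast
        nlinarith
    rw [← mul_div_assoc, ENNReal.le_div_iff_mul_le (Or.inl (tsub_pos_of_lt h1).ne')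
      (Or.inl (by simp))]
    have : ((socLE (Lpow I s) : ℕ) : NNReal) * (A - 1) ≤ s * A := by
      rw [← NNReal.coe_le_coe]
      push_cast [NNReal.coe_sub h1'.le]
      exact main
    exact_mod_cast this
  · intro n hn
    have hp := hgt n hn
    obtain ⟨q, hq⟩ : ∃ q, initialDegree (I n) = n + q := ⟨_, (Nat.add_sub_of_le hp.le).symm⟩
    have hq1 : 1 ≤ q := by omega
    have hq0 : (q : ℝ≥0∞) ≠ 0 := by simp; omega
    have hn0 : (n : ℝ≥0∞) ≠ 0 := by simp; omega
    have hBge : ((n + q : ℕ) : ℝ≥0∞) / q ≤ B := by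
      refine ge_of_tendsto (hB.comp (htend q hq1)) ?_
      filter_upwards [eventually_ge_atTop 1] with k hk
      rw [← hcan k _ _ hk]
      simp only [Function.comp]
      gcongr
      have := hge (k * q) (k * n) (Nat.mul_pos hk hn) (by
        have := hsub n hn k hk
        rw [hq, mul_add] at this
        exact this)
      rw [mul_add]
      exact this
    have hB1 : (n : ℝ≥0∞) / q ≤ B - 1 := by
      refine ENNReal.le_sub_of_add_le_right (by simp) ?_
      refine le_trans (le_of_eq ?_) hBge
      push_cast
      rw [ENNReal.add_div, ENNReal.div_self hq0 (by simp)]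
    have hinv : (B - 1)⁻¹ ≤ (q : ℝ≥0∞) / n := by
      have := ENNReal.inv_le_inv.2 hB1
      rwa [ENNReal.inv_div (Or.inl (by simp)) (Or.inl hq0)] at this
    calc (n : ℝ≥0∞) * (1 + (B - 1)⁻¹) ≤ n * (1 + q / n) := by gcongr
      _ = (initialDegree (I n) : ℝ≥0∞) := by
        rw [hq, mul_add, mul_one, ENNReal.mul_div_cancel hn0 (by simp)]
        push_cast
        rfl
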